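/- (Proposition 5, total reinforcement paradox probability under IAC, complete ballots.) The IAC probability, over complete-ballot profiles with total 1, of the event that some candidate W demonstrates a reinforcement paradox (i.e., there exists a candidate W and a partition p = p1 + p2 into two profiles with nonnegative entries such that W wins strictly under IRV in both p1 and p2 but W does not win strictly in p) equals 191/768. -/

import Mathlib

/-- A three-candidate complete-ballot profile: numbers of ballots with rankings
A≻B≻C, A≻C≻B, B≻A≻C, B≻C≻A, C≻A≻B, C≻B≻A respectively. -/
structure Profile where
  x1 : ℝ
  x2 : ℝ
  y1 : ℝ
  y2 : ℝ
  z1 : ℝ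
  z2 : ℝ

namespace Profile

def nonneg (p : Profile) : Prop :=
  0 ≤ p.x1 ∧ 0 ≤ p.x2 ∧ 0 ≤ p.y1 ∧ 0 ≤ p.y2 ∧ 0 ≤ p.z1 ∧ 0 ≤ p.z2

instance : Add Profile :=
  ⟨fun p q => ⟨p.x1 + q.x1, p.x2 + q.x2, p.y1 + q.y1, p.y2 + q.y2, p.z1 + q.z1, p.z2 + q.z2⟩⟩

/-- First-place total of candidate A. -/
def X (p : Profile) : ℝ := p.x1 + p.x2
/-- First-place total of candidate B. -/
def Y (p : Profile) : ℝ := p.y1 + p.y2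
/-- First-place total of candidate C. -/
def Z (p : Profile) : ℝ := p.z1 + p.z2
/-- Total vote. -/
def V (p : Profile) : ℝ := p.X + p.Y + p.Z

end Profile

inductive Cand | A | B | C

/-- Candidate `W` wins strictly under IRV in profile `p`. -/
def wins : Cand → Profile → Prop
  | Cand.A, p => p.X > p.Y + p.Z ∨
      (p.Z < p.X ∧ p.Z < p.Y ∧ p.X + p.z1 > p.Y + p.z2) ∨
      (p.Y < p.X ∧ p.Y < p.Z ∧ p.X + p.y1 > p.Z + p.y2)
  | Cand.B, p => p.Y > p.X + p.Z ∨
      (p.Z < p.Y ∧ p.Z < p.X ∧ p.Y + p.z2 > p.X + p.z1) ∨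
      (p.X < p.Y ∧ p.X < p.Z ∧ p.Y + p.x1 > p.Z + p.x2)
  | Cand.C, p => p.Z > p.X + p.Y ∨
      (p.X < p.Z ∧ p.X < p.Y ∧ p.Z + p.x2 > p.Y + p.x1) ∨
      (p.Y < p.Z ∧ p.Y < p.X ∧ p.Z + p.y2 > p.X + p.y1)

/-- Profile `p` demonstrates a reinforcement paradox for candidate `W`: there is a
partition `p = p1 + p2` into profiles with nonnegative entries such that `W` wins
strictly in both `p1` and `p2` but `W` does not win strictly in `p`. -/
def paradox (W : Cand) (p : Profile) : Prop :=
  ∃ p1 p2 : Profile, p1.nonneg ∧ p2.nonneg ∧ p1 + p2 = p ∧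
    wins W p1 ∧ wins W p2 ∧ ¬ wins W p

/-- The simplex of complete-ballot profiles with total 1, parameterized by the
first five coordinates (X1, X2, Y1, Y2, Z1). -/
def T : Set (Fin 5 → ℝ) :=
  {v | (∀ i, 0 ≤ v i) ∧ v 0 + v 1 + v 2 + v 3 + v 4 ≤ 1}

/-- The profile with total 1 associated to a point of `T`, with
`Z2 = 1 - (X1 + X2 + Y1 + Y2 + Z1)`. -/
noncomputable def profOf (v : Fin 5 → ℝ) : Profile :=
  ⟨v 0, v 1, v 2, v 3, v 4, 1 - (v 0 + v 1 + v 2 + v 3 + v 4)⟩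

/-- First-place total of a candidate. -/
def fp : Cand → Profile → ℝ
  | Cand.A, p => p.X
  | Cand.B, p => p.Y
  | Cand.C, p => p.Z

/-- Candidate `W`'s first-place total is strictly smallest among the three. -/
def strictlySmallest (W : Cand) (p : Profile) : Prop :=
  ∀ W' : Cand, W' ≠ W → fp W p < fp W' p
open MeasureTheory Set

theorem cell_step {n : ℕ} (S : Set (Fin (n+1) → ℝ)) (hS : MeasurableSet S) (l u : ℝ) (hlu : l ≤ u)
    (hout : ∀ w ∈ S, l < w 0 ∧ w 0 < u) (c0 c1 c2 c3 c4 I : ℝ)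
    (hI : I = c0 * (u - l) + c1 * (u^2 - l^2) / 2 + c2 * (u^3 - l^3) / 3 + c3 * (u^4 - l^4) / 4
      + c4 * (u^5 - l^5) / 5)
    (hsl : ∀ x, l < x → x < u → MeasurableSet {w : Fin n → ℝ | (Fin.cons x w : Fin (n+1) → ℝ) ∈ S} →
      0 ≤ c0 + c1 * x + c2 * x^2 + c3 * x^3 + c4 * x^4 ∧
      volume {w : Fin n → ℝ | (Fin.cons x w : Fin (n+1) → ℝ) ∈ S} =
        ENNReal.ofReal (c0 + c1 * x + c2 * x^2 + c3 * x^3 + c4 * x^4)) :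
    0 ≤ I ∧ volume S = ENNReal.ofReal I := by
  set f : ℝ → ℝ := fun x => c0 + c1 * x + c2 * x^2 + c3 * x^3 + c4 * x^4 with hf
  have hfc : Continuous f := by fun_prop
  have hmeas : ∀ x, MeasurableSet {w : Fin n → ℝ | (Fin.cons x w : Fin (n+1) → ℝ) ∈ S} := by
    intro x
    have : Measurable (fun w : Fin n → ℝ => (Fin.cons x w : Fin (n+1) → ℝ)) := by
      rw [measurable_pi_iff]
      intro i
      refine Fin.cases ?_ (fun j => ?_) i
      · simp
      · simpa using measurable_pi_apply j
    exact this hS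
  have hint : ∫ x in l..u, f x = I := by
    have : ∀ x ∈ uIcc l u, HasDerivAt (fun x => c0 * x + c1 * x^2 / 2 + c2 * x^3 / 3 + c3 * x^4 / 4
      + c4 * x^5 / 5) (f x) x := by
      intro x _
      have h1 := ((hasDerivAt_id x).const_mul c0)
      have h2 := (((hasDerivAt_pow 2 x).const_mul c1).div_const 2)
      have h3 := (((hasDerivAt_pow 3 x).const_mul c2).div_const 3)
      have h4 := (((hasDerivAt_pow 4 x).const_mul c3).div_const 4)
      have h5 := (((hasDerivAt_pow 5 x).const_mul c4).div_const 5)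
      have := (((h1.add h2).add h3).add h4).add h5
      refine HasDerivAt.congr_deriv this ?_
      simp only [hf]; push_cast; ring
    rw [intervalIntegral.integral_eq_sub_of_hasDerivAt this (hfc.intervalIntegrable _ _), hI]
    ring
  have hpos : ∀ x ∈ Ioo l u, 0 ≤ f x := fun x hx => (hsl x hx.1 hx.2 (hmeas x)).1
  have hset : ∫ x in Ioo l u, f x = I := by
    rw [← hint, intervalIntegral.integral_of_le hlu, integral_Ioc_eq_integral_Ioo]
  refine ⟨?_, ?_⟩
  · rw [← hset]; exact setIntegral_nonneg measurableSet_Ioo hpos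
  have mp := (volume_preserving_piFinSuccAbove (fun _ : Fin (n+1) => ℝ) 0).symm
  rw [← mp.measure_preimage hS.nullMeasurableSet, Measure.volume_eq_prod,
    Measure.prod_apply (mp.measurable hS)]
  have key : ∀ x, volume (Prod.mk x ⁻¹' ((MeasurableEquiv.piFinSuccAbove (fun _ : Fin (n+1) => ℝ) 0).symm ⁻¹' S))
      = (Ioo l u).indicator (fun x => ENNReal.ofReal (f x)) x := by
    intro x
    have e : (Prod.mk x ⁻¹' ((MeasurableEquiv.piFinSuccAbove (fun _ : Fin (n+1) => ℝ) 0).symm ⁻¹' S))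
      = {w : Fin n → ℝ | (Fin.cons x w : Fin (n+1) → ℝ) ∈ S} := by
      ext w
      simp [MeasurableEquiv.piFinSuccAbove, Fin.insertNthEquiv]
    rw [e]
    by_cases hx : x ∈ Ioo l u
    · rw [indicator_of_mem hx]; exact (hsl x hx.1 hx.2 (hmeas x)).2
    · rw [indicator_of_notMem hx]
      convert measure_empty (μ := (volume : Measure (Fin n → ℝ)))
      ext w
      simp only [mem_ofPred_eq, mem_empty_iff_false, iff_false]
      intro h
      exact hx (by simpa using hout _ h)
  rw [lintegral_congr key, lintegral_indicator measurableSet_Ioo,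
    ← ofReal_integral_eq_lintegral_ofReal, hset]
  · exact (hfc.integrableOn_Icc).mono_set Ioo_subset_Icc_self
  · exact (ae_restrict_iff' measurableSet_Ioo).2 (Filter.Eventually.of_forall hpos)

theorem cell_base (S : Set (Fin 0 → ℝ)) (h : ∀ w, w ∈ S) : 0 ≤ (1:ℝ) ∧ volume S = ENNReal.ofReal 1 := by
  have : S = univ := eq_univ_of_forall h
  rw [this]
  refine ⟨by norm_num, ?_⟩
  simp [volume_pi]

/-- a polynomial-moment relation: `V` is polynomial in its argument, and `I` is its integral. -/
def PolyInt (V : ℝ → ℝ) (l u I : ℝ) : Prop :=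
  l ≤ u ∧ ∃ c0 c1 c2 c3 c4 : ℝ, (∀ x, V x = c0 + c1 * x + c2 * x^2 + c3 * x^3 + c4 * x^4) ∧
    I = c0 * (u - l) + c1 * (u^2 - l^2) / 2 + c2 * (u^3 - l^3) / 3 + c3 * (u^4 - l^4) / 4
      + c4 * (u^5 - l^5) / 5

theorem cell_step' {n : ℕ} {S : Set (Fin (n+1) → ℝ)} (hS : MeasurableSet S) {l u I : ℝ} {V : ℝ → ℝ}
    (hV : PolyInt V l u I)
    (hout : ∀ w ∈ S, l < w 0 ∧ w 0 < u)
    (hsl : ∀ x, l < x → x < u → MeasurableSet {w : Fin n → ℝ | (Fin.cons x w : Fin (n+1) → ℝ) ∈ S} →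
      0 ≤ V x ∧
      volume {w : Fin n → ℝ | (Fin.cons x w : Fin (n+1) → ℝ) ∈ S} = ENNReal.ofReal (V x)) :
    0 ≤ I ∧ volume S = ENNReal.ofReal I := by
  obtain ⟨hlu, c0, c1, c2, c3, c4, hc, hI⟩ := hV
  refine cell_step S hS l u hlu hout c0 c1 c2 c3 c4 I hI ?_
  intro x h1 h2 h3
  rw [← hc x]
  exact hsl x h1 h2 h3

/-- An iterated cell. -/
def cell5 (l0 u0 : ℝ) (l1 u1 : ℝ → ℝ) (l2 u2 : ℝ → ℝ → ℝ) (l3 u3 : ℝ → ℝ → ℝ → ℝ)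
    (l4 u4 : ℝ → ℝ → ℝ → ℝ → ℝ) : Set (Fin 5 → ℝ) :=
  {w | (l0 < w 0 ∧ w 0 < u0) ∧ (l1 (w 0) < w 1 ∧ w 1 < u1 (w 0)) ∧
    (l2 (w 0) (w 1) < w 2 ∧ w 2 < u2 (w 0) (w 1)) ∧
    (l3 (w 0) (w 1) (w 2) < w 3 ∧ w 3 < u3 (w 0) (w 1) (w 2)) ∧
    (l4 (w 0) (w 1) (w 2) (w 3) < w 4 ∧ w 4 < u4 (w 0) (w 1) (w 2) (w 3))}

theorem cell5_vol {l0 u0 : ℝ} {l1 u1 : ℝ → ℝ} {l2 u2 : ℝ → ℝ → ℝ} {l3 u3 : ℝ → ℝ → ℝ → ℝ}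
    {l4 u4 : ℝ → ℝ → ℝ → ℝ → ℝ}
    (hm : MeasurableSet (cell5 l0 u0 l1 u1 l2 u2 l3 u3 l4 u4))
    (V1 : ℝ → ℝ) (V2 : ℝ → ℝ → ℝ) (V3 : ℝ → ℝ → ℝ → ℝ) (V4 : ℝ → ℝ → ℝ → ℝ → ℝ) (I : ℝ)
    (h0 : PolyInt V1 l0 u0 I)
    (h1 : ∀ x, l0 < x → x < u0 → PolyInt (V2 x) (l1 x) (u1 x) (V1 x))
    (h2 : ∀ x, l0 < x → x < u0 → ∀ y, l1 x < y → y < u1 x →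
      PolyInt (V3 x y) (l2 x y) (u2 x y) (V2 x y))
    (h3 : ∀ x, l0 < x → x < u0 → ∀ y, l1 x < y → y < u1 x → ∀ z, l2 x y < z → z < u2 x y →
      PolyInt (V4 x y z) (l3 x y z) (u3 x y z) (V3 x y z))
    (h4 : ∀ x, l0 < x → x < u0 → ∀ y, l1 x < y → y < u1 x → ∀ z, l2 x y < z → z < u2 x y →
      ∀ t, l3 x y z < t → t < u3 x y z →
      l4 x y z t ≤ u4 x y z t ∧ V4 x y z t = u4 x y z t - l4 x y z t) :
    volume (cell5 l0 u0 l1 u1 l2 u2 l3 u3 l4 u4) = ENNReal.ofReal I := by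
  refine (cell_step' hm h0 (fun w hw => hw.1) ?_).2
  intro x hx hx' m1
  refine cell_step' m1 (h1 x hx hx') (fun w hw => hw.2.1) ?_
  intro y hy hy' m2
  refine cell_step' m2 (h2 x hx hx' y hy hy') (fun w hw => hw.2.2.1) ?_
  intro z hz hz' m3
  refine cell_step' m3 (h3 x hx hx' y hy hy' z hz hz') (fun w hw => hw.2.2.2.1) ?_
  intro t ht ht' m4
  obtain ⟨h5, h6⟩ := h4 x hx hx' y hy hy' z hz hz' t ht ht'
  refine cell_step' (V := fun _ => 1) (l := l4 x y z t) (u := u4 x y z t) m4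
    ⟨h5, 1, 0, 0, 0, 0, fun x => by ring, by rw [h6]; ring⟩ (fun w hw => hw.2.2.2.2) ?_
  intro s hs hs' _
  refine cell_base _ ?_
  intro w
  exact ⟨⟨hx, hx'⟩, ⟨hy, hy'⟩, ⟨hz, hz'⟩, ⟨ht, ht'⟩, ⟨hs, hs'⟩⟩

theorem cell5_meas {l0 u0 : ℝ} {l1 u1 : ℝ → ℝ} {l2 u2 : ℝ → ℝ → ℝ} {l3 u3 : ℝ → ℝ → ℝ → ℝ}
    {l4 u4 : ℝ → ℝ → ℝ → ℝ → ℝ}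
    (m1 : Measurable fun w : Fin 5 → ℝ => l1 (w 0)) (m1' : Measurable fun w : Fin 5 → ℝ => u1 (w 0))
    (m2 : Measurable fun w : Fin 5 → ℝ => l2 (w 0) (w 1))
    (m2' : Measurable fun w : Fin 5 → ℝ => u2 (w 0) (w 1))
    (m3 : Measurable fun w : Fin 5 → ℝ => l3 (w 0) (w 1) (w 2))
    (m3' : Measurable fun w : Fin 5 → ℝ => u3 (w 0) (w 1) (w 2))
    (m4 : Measurable fun w : Fin 5 → ℝ => l4 (w 0) (w 1) (w 2) (w 3))
    (m4' : Measurable fun w : Fin 5 → ℝ => u4 (w 0) (w 1) (w 2) (w 3)) :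
    MeasurableSet (cell5 l0 u0 l1 u1 l2 u2 l3 u3 l4 u4) := by
  have e : ∀ i : Fin 5, Measurable fun w : Fin 5 → ℝ => w i := fun i => measurable_pi_apply i
  exact ((measurableSet_lt measurable_const (e 0)).inter (measurableSet_lt (e 0) measurable_const)).inter
    (((measurableSet_lt m1 (e 1)).inter (measurableSet_lt (e 1) m1')).inter
    (((measurableSet_lt m2 (e 2)).inter (measurableSet_lt (e 2) m2')).inter
    (((measurableSet_lt m3 (e 3)).inter (measurableSet_lt (e 3) m3')).inter
    ((measurableSet_lt m4 (e 4)).inter (measurableSet_lt (e 4) m4')))))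

def cellP1 : Set (Fin 5 → ℝ) := cell5
  ((1/3)) ((1/2))
  (fun Y => (1/2) + (-1/2)*Y) (fun Y => Y)
  (fun Y X => (-1)*X + Y) (fun _ X => (1/2) + (-1)*X)
  (fun _ _ _ => 0) (fun Y X c => (-1/2) + X + Y + c)
  (fun _ _ _ _ => 0) (fun _ X _ _ => X)

theorem cellP1_meas : MeasurableSet cellP1 := by
  apply cell5_meas <;> fun_prop

theorem cellP1_vol : volume cellP1 = ENNReal.ofReal ((1/6480)) := by
  refine cell5_vol cellP1_meas
    (fun Y => (1/64) + (-5/32)*Y + (25/64)*Y^2 + (-9/16)*Y^4)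
    (fun Y X => (-1/8)*X + X*Y + (-3/2)*X*Y^2)
    (fun Y X c => (-1/2)*X + X*Y + X*c + X^2)
    (fun _ X _ _ => X)
    ((1/6480)) ?_ ?_ ?_ ?_ ?_
  · exact ⟨by linarith, (1/64), (-5/32), (25/64), 0, (-9/16), fun Y => by ring, by ring⟩
  · intro Y hY hY1
    exact ⟨by linarith, 0, (-1/8) + Y + (-3/2)*Y^2, 0, 0, 0, fun X => by ring, by ring⟩
  · intro Y hY hY1 X hX hX1
    exact ⟨by linarith, (-1/2)*X + X*Y + X^2, X, 0, 0, 0, fun c => by ring, by ring⟩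
  · intro Y hY hY1 X hX hX1 c hc hc1
    exact ⟨by linarith, X, 0, 0, 0, 0, fun b => by ring, by ring⟩
  · intro Y hY hY1 X hX hX1 c hc hc1 b hb hb1
    exact ⟨by linarith, by ring⟩

def cellP2 : Set (Fin 5 → ℝ) := cell5
  ((1/3)) ((1/2))
  (fun X => (1/2) + (-1/2)*X) (fun X => X)
  (fun _ _ => 0) (fun X _ => (1/2) + (-1)*X)
  (fun _ _ _ => 0) (fun X Y c => (-1/2) + X + Y + c)
  (fun _ _ _ _ => 0) (fun X _ _ _ => X)

theorem cellP2_meas : MeasurableSet cellP2 := by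
  apply cell5_meas <;> fun_prop

theorem cellP2_vol : volume cellP2 = ENNReal.ofReal ((7/46080)) := by
  refine cell5_vol cellP2_meas
    (fun X => (-3/16)*X^2 + (15/16)*X^3 + (-9/8)*X^4)
    (fun X Y => (-1/8)*X + (1/2)*X*Y + (1/2)*X^2 + (-1)*X^2*Y + (-1/2)*X^3)
    (fun X Y c => (-1/2)*X + X*Y + X*c + X^2)
    (fun X _ _ _ => X)
    ((7/46080)) ?_ ?_ ?_ ?_ ?_
  · exact ⟨by linarith, 0, 0, (-3/16), (15/16), (-9/8), fun X => by ring, by ring⟩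
  · intro X hX hX1
    exact ⟨by linarith, (-1/8)*X + (1/2)*X^2 + (-1/2)*X^3, (1/2)*X + (-1)*X^2, 0, 0, 0, fun Y => by ring, by ring⟩
  · intro X hX hX1 Y hY hY1
    exact ⟨by linarith, (-1/2)*X + X*Y + X^2, X, 0, 0, 0, fun c => by ring, by ring⟩
  · intro X hX hX1 Y hY hY1 c hc hc1
    exact ⟨by linarith, X, 0, 0, 0, 0, fun b => by ring, by ring⟩
  · intro X hX hX1 Y hY hY1 c hc hc1 b hb hb1
    exact ⟨by linarith, by ring⟩

def cellQa : Set (Fin 5 → ℝ) := cell5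
  ((1/4)) ((1/3))
  (fun Z => Z) (fun Z => (1/2) + (-1/2)*Z)
  (fun _ _ => 0) (fun Z X => (1) + (-2)*X + (-1)*Z)
  (fun Z X _ => X + (-1)*Z) (fun Z X _ => (-1/2) + X + Z)
  (fun Z _ _ b => (1/2) + (-1)*Z + (-1)*b) (fun _ X _ _ => X)

theorem cellQa_meas : MeasurableSet cellQa := by
  apply cell5_meas <;> fun_prop

theorem cellQa_vol : volume cellQa = ENNReal.ofReal ((1/368640)) := by
  refine cell5_vol cellQa_meas
    (fun Z => (5/96) + (-37/48)*Z + (135/32)*Z^2 + (-81/8)*Z^3 + (9)*Z^4)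
    (fun Z X => (3/8) + (-7/4)*X + (9)*X*Z + (-8)*X*Z^2 + (2)*X^2 + (-8)*X^2*Z + (-19/8)*Z + (4)*Z^2 + (-2)*Z^3)
    (fun Z X _ => (3/8) + (-1)*X + (4)*X*Z + (-2)*Z + (2)*Z^2)
    (fun Z X _ b => (-1/2) + X + Z + b)
    ((1/368640)) ?_ ?_ ?_ ?_ ?_
  · exact ⟨by linarith, (5/96), (-37/48), (135/32), (-81/8), (9), fun Z => by ring, by ring⟩
  · intro Z hZ hZ1
    exact ⟨by linarith, (3/8) + (-19/8)*Z + (4)*Z^2 + (-2)*Z^3, (-7/4) + (9)*Z + (-8)*Z^2, (2) + (-8)*Z, 0, 0, fun X => by ring, by ring⟩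
  · intro Z hZ hZ1 X hX hX1
    exact ⟨by linarith, (3/8) + (-1)*X + (4)*X*Z + (-2)*Z + (2)*Z^2, 0, 0, 0, 0, fun c => by ring, by ring⟩
  · intro Z hZ hZ1 X hX hX1 c hc hc1
    exact ⟨by linarith, (-1/2) + X + Z, (1), 0, 0, 0, fun b => by ring, by ring⟩
  · intro Z hZ hZ1 X hX hX1 c hc hc1 b hb hb1
    exact ⟨by linarith, by ring⟩

def cellQb : Set (Fin 5 → ℝ) := cell5
  ((1/4)) ((1/3))
  (fun Z => Z) (fun Z => (1/2) + (-1/2)*Z)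
  (fun _ _ => 0) (fun Z X => (1) + (-2)*X + (-1)*Z)
  (fun Z X _ => (-1/2) + X + Z) (fun Z X _ => (1) + (-1)*X + (-1)*Z)
  (fun Z X _ _ => (1) + (-1)*X + (-2)*Z) (fun _ X _ _ => X)

theorem cellQb_meas : MeasurableSet cellQb := by
  apply cell5_meas <;> fun_prop

theorem cellQb_vol : volume cellQb = ENNReal.ofReal ((17/829440)) := by
  refine cell5_vol cellQb_meas
    (fun Z => (-5/24) + (65/24)*Z + (-13)*Z^2 + (219/8)*Z^3 + (-171/8)*Z^4)
    (fun Z X => (-3/2) + (8)*X + (-23)*X*Z + (16)*X*Z^2 + (-14)*X^2 + (20)*X^2*Z + (8)*X^3 + (13/2)*Z + (-9)*Z^2 + (4)*Z^3)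
    (fun Z X _ => (-3/2) + (5)*X + (-8)*X*Z + (-4)*X^2 + (5)*Z + (-4)*Z^2)
    (fun Z X _ _ => (-1) + (2)*X + (2)*Z)
    ((17/829440)) ?_ ?_ ?_ ?_ ?_
  · exact ⟨by linarith, (-5/24), (65/24), (-13), (219/8), (-171/8), fun Z => by ring, by ring⟩
  · intro Z hZ hZ1
    exact ⟨by linarith, (-3/2) + (13/2)*Z + (-9)*Z^2 + (4)*Z^3, (8) + (-23)*Z + (16)*Z^2, (-14) + (20)*Z, (8), 0, fun X => by ring, by ring⟩
  · intro Z hZ hZ1 X hX hX1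
    exact ⟨by linarith, (-3/2) + (5)*X + (-8)*X*Z + (-4)*X^2 + (5)*Z + (-4)*Z^2, 0, 0, 0, 0, fun c => by ring, by ring⟩
  · intro Z hZ hZ1 X hX hX1 c hc hc1
    exact ⟨by linarith, (-1) + (2)*X + (2)*Z, 0, 0, 0, 0, fun b => by ring, by ring⟩
  · intro Z hZ hZ1 X hX hX1 c hc hc1 b hb hb1
    exact ⟨by linarith, by ring⟩

def cellQc : Set (Fin 5 → ℝ) := cell5
  ((1/4)) ((1/3))
  (fun Z => Z) (fun Z => (1/2) + (-1/2)*Z)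
  (fun Z X => (1) + (-2)*X + (-1)*Z) (fun _ X => (1/2) + (-1)*X)
  (fun Z _ c => (1/2) + (-1)*Z + c) (fun Z X _ => (1) + (-1)*X + (-1)*Z)
  (fun Z X _ _ => (1) + (-1)*X + (-2)*Z) (fun _ X _ _ => X)

theorem cellQc_meas : MeasurableSet cellQc := by
  apply cell5_meas <;> fun_prop

theorem cellQc_vol : volume cellQc = ENNReal.ofReal ((35/5308416)) := by
  refine cell5_vol cellQc_meas
    (fun Z => (-1/64) + (1/4)*Z + (-3/2)*Z^2 + (4)*Z^3 + (-255/64)*Z^4)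
    (fun Z X => (-1/8) + (3/4)*X + (-3)*X*Z + (3)*X*Z^2 + (-3/2)*X^2 + (3)*X^2*Z + X^3 + (3/4)*Z + (-3/2)*Z^2 + Z^3)
    (fun Z X c => (-1/2) + (2)*X + (-2)*X*Z + (-2)*X*c + (-2)*X^2 + Z + (-2)*Z*c + c)
    (fun Z X _ _ => (-1) + (2)*X + (2)*Z)
    ((35/5308416)) ?_ ?_ ?_ ?_ ?_
  · exact ⟨by linarith, (-1/64), (1/4), (-3/2), (4), (-255/64), fun Z => by ring, by ring⟩
  · intro Z hZ hZ1
    exact ⟨by linarith, (-1/8) + (3/4)*Z + (-3/2)*Z^2 + Z^3, (3/4) + (-3)*Z + (3)*Z^2, (-3/2) + (3)*Z, (1), 0, fun X => by ring, by ring⟩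
  · intro Z hZ hZ1 X hX hX1
    exact ⟨by linarith, (-1/2) + (2)*X + (-2)*X*Z + (-2)*X^2 + Z, (1) + (-2)*X + (-2)*Z, 0, 0, 0, fun c => by ring, by ring⟩
  · intro Z hZ hZ1 X hX hX1 c hc hc1
    exact ⟨by linarith, (-1) + (2)*X + (2)*Z, 0, 0, 0, 0, fun b => by ring, by ring⟩
  · intro Z hZ hZ1 X hX hX1 c hc hc1 b hb hb1
    exact ⟨by linarith, by ring⟩

def cellQ2 : Set (Fin 5 → ℝ) := cell5
  ((1/4)) ((1/3))
  (fun Z => Z) (fun Z => (1/2) + (-1/2)*Z)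
  (fun _ _ => 0) (fun Z Y => (-1/2) + Y + Z)
  (fun Z _ c => (1/2) + (-1)*Z + c) (fun _ Y _ => Y)
  (fun Z Y _ _ => Y + (-1)*Z) (fun Z Y _ _ => (1) + (-1)*Y + (-1)*Z)

theorem cellQ2_meas : MeasurableSet cellQ2 := by
  apply cell5_meas <;> fun_prop

theorem cellQ2_vol : volume cellQ2 = ENNReal.ofReal ((83/8847360)) := by
  refine cell5_vol cellQ2_meas
    (fun Z => (1/64) + (-5/24)*Z + Z^2 + (-2)*Z^3 + (87/64)*Z^4)
    (fun Z Y => (1/8) + (-3/4)*Y + (2)*Y*Z + (-1)*Y*Z^2 + (3/2)*Y^2 + (-2)*Y^2*Z + (-1)*Y^3 + (-1/2)*Z + (1/2)*Z^2)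
    (fun Z Y c => (-1/2) + (2)*Y + (-2)*Y*Z + (2)*Y*c + (-2)*Y^2 + Z + (-1)*c)
    (fun _ Y _ _ => (1) + (-2)*Y)
    ((83/8847360)) ?_ ?_ ?_ ?_ ?_
  · exact ⟨by linarith, (1/64), (-5/24), (1), (-2), (87/64), fun Z => by ring, by ring⟩
  · intro Z hZ hZ1
    exact ⟨by linarith, (1/8) + (-1/2)*Z + (1/2)*Z^2, (-3/4) + (2)*Z + (-1)*Z^2, (3/2) + (-2)*Z, (-1), 0, fun Y => by ring, by ring⟩
  · intro Z hZ hZ1 Y hY hY1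
    exact ⟨by linarith, (-1/2) + (2)*Y + (-2)*Y*Z + (-2)*Y^2 + Z, (-1) + (2)*Y, 0, 0, 0, fun c => by ring, by ring⟩
  · intro Z hZ hZ1 Y hY hY1 c hc hc1
    exact ⟨by linarith, (1) + (-2)*Y, 0, 0, 0, 0, fun b => by ring, by ring⟩
  · intro Z hZ hZ1 Y hY hY1 c hc hc1 b hb hb1
    exact ⟨by linarith, by ring⟩

/-! ### Combinatorial core -/

theorem split_sum {a b s : ℝ} (ha : 0 ≤ a) (hb : 0 ≤ b) (hs : 0 ≤ s) (h : s ≤ a + b) :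
    ∃ s1 s2, 0 ≤ s1 ∧ s1 ≤ a ∧ 0 ≤ s2 ∧ s2 ≤ b ∧ s1 + s2 = s := by
  rcases le_total s a with h1 | h1
  · exact ⟨s, 0, hs, h1, le_rfl, hb, by ring⟩
  · exact ⟨a, s - a, ha, le_rfl, by linarith, by linarith, by ring⟩

/-- Weak form of the winning region of A. -/
theorem winsA_weak {p : Profile} (hp : p.nonneg) (h : wins Cand.A p) :
    (p.Z ≤ p.X ∧ p.Z ≤ p.Y ∧ p.Y + p.z2 < p.X + p.z1) ∨
    (p.Y ≤ p.X ∧ p.Y ≤ p.Z ∧ p.Z + p.y2 < p.X + p.y1) := by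
  obtain ⟨h1, h2, h3, h4, h5, h6⟩ := hp
  simp only [wins, Profile.X, Profile.Y, Profile.Z] at *
  rcases h with h | ⟨h, h', h''⟩ | ⟨h, h', h''⟩
  · rcases le_total (p.z1 + p.z2) (p.y1 + p.y2) with g | g
    · left; refine ⟨?_, ?_, ?_⟩ <;> linarith
    · right; refine ⟨?_, ?_, ?_⟩ <;> linarith
  · left; refine ⟨?_, ?_, ?_⟩ <;> linarith
  · right; refine ⟨?_, ?_, ?_⟩ <;> linarith

theorem winsC_weak {p : Profile} (hp : p.nonneg) (h : wins Cand.C p) :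
    (p.X ≤ p.Z ∧ p.X ≤ p.Y ∧ p.Y + p.x1 < p.Z + p.x2) ∨
    (p.Y ≤ p.Z ∧ p.Y ≤ p.X ∧ p.X + p.y1 < p.Z + p.y2) := by
  obtain ⟨h1, h2, h3, h4, h5, h6⟩ := hp
  simp only [wins, Profile.X, Profile.Y, Profile.Z] at *
  rcases h with h | ⟨h, h', h''⟩ | ⟨h, h', h''⟩
  · rcases le_total (p.x1 + p.x2) (p.y1 + p.y2) with g | g
    · left; refine ⟨?_, ?_, ?_⟩ <;> linarith
    · right; refine ⟨?_, ?_, ?_⟩ <;> linarith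
  · left; refine ⟨?_, ?_, ?_⟩ <;> linarith
  · right; refine ⟨?_, ?_, ?_⟩ <;> linarith

/-- C is eliminated first, then B beats A. -/
def Order (p : Profile) : Prop := p.Z < p.X ∧ p.Z < p.Y ∧ p.X + p.z1 < p.Y + p.z2

theorem add_x1 (p q : Profile) : (p + q).x1 = p.x1 + q.x1 := rfl
theorem add_x2 (p q : Profile) : (p + q).x2 = p.x2 + q.x2 := rfl
theorem add_y1 (p q : Profile) : (p + q).y1 = p.y1 + q.y1 := rfl
theorem add_y2 (p q : Profile) : (p + q).y2 = p.y2 + q.y2 := rfl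
theorem add_z1 (p q : Profile) : (p + q).z1 = p.z1 + q.z1 := rfl
theorem add_z2 (p q : Profile) : (p + q).z2 = p.z2 + q.z2 := rfl

theorem paradoxA_nec {p : Profile} (ho : Order p) (h : paradox Cand.A p) :
    p.Y ≤ p.X + p.z1 ∧ p.y2 + p.z2 ≤ p.X + p.y1 + p.z1 := by
  obtain ⟨p1, p2, n1, n2, e, w1, w2, -⟩ := h
  replace w1 := winsA_weak n1 w1
  replace w2 := winsA_weak n2 w2
  obtain ⟨a1, a2, a3, a4, a5, a6⟩ := n1
  obtain ⟨b1, b2, b3, b4, b5, b6⟩ := n2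
  subst e
  obtain ⟨o1, o2, o3⟩ := ho
  simp only [Profile.X, Profile.Y, Profile.Z, add_x1, add_x2, add_y1, add_y2, add_z1, add_z2] at *
  rcases w1 with ⟨u1, u2, u3⟩ | ⟨u1, u2, u3⟩ <;> rcases w2 with ⟨v1, v2, v3⟩ | ⟨v1, v2, v3⟩ <;>
    constructor <;> linarith

theorem paradoxC_nec {p : Profile} (ho : Order p) (h : paradox Cand.C p) :
    p.X + p.Y ≤ 3 * p.Z ∧ p.Y - p.Z ≤ p.x2 ∧ p.X - p.Z ≤ p.y2 ∧
      p.X + p.Y - p.Z ≤ 2 * (p.x2 + p.y2) := by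
  obtain ⟨p1, p2, n1, n2, e, w1, w2, -⟩ := h
  replace w1 := winsC_weak n1 w1
  replace w2 := winsC_weak n2 w2
  obtain ⟨a1, a2, a3, a4, a5, a6⟩ := n1
  obtain ⟨b1, b2, b3, b4, b5, b6⟩ := n2
  subst e
  obtain ⟨o1, o2, o3⟩ := ho
  simp only [Profile.X, Profile.Y, Profile.Z, add_x1, add_x2, add_y1, add_y2, add_z1, add_z2] at *
  rcases w1 with ⟨u1, u2, u3⟩ | ⟨u1, u2, u3⟩ <;> rcases w2 with ⟨v1, v2, v3⟩ | ⟨v1, v2, v3⟩ <;>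
    refine ⟨?_, ?_, ?_, ?_⟩ <;> linarith

theorem not_paradoxB {p : Profile} (ho : Order p) : ¬ paradox Cand.B p := by
  rintro ⟨p1, p2, -, -, -, -, -, h⟩
  exact h (Or.inr (Or.inl ⟨ho.2.1, ho.1, ho.2.2⟩))

theorem paradoxA_suf {p : Profile} (hp : p.nonneg) (ho : Order p)
    (h1 : p.Y < p.X + p.z1) (h2 : p.y2 + p.z2 < p.X + p.y1 + p.z1) : paradox Cand.A p := by
  obtain ⟨a1, a2, a3, a4, a5, a6⟩ := hp
  obtain ⟨o1, o2, o3⟩ := ho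
  rcases p with ⟨x1, x2, y1, y2, z1, z2⟩
  simp only [Profile.X, Profile.Y, Profile.Z] at *
  obtain ⟨k, k1, k2, k3⟩ : ∃ k, k ≤ y1 ∧ 2 * k ≤ z2 ∧ y1 + y2 + z2 - x1 - x2 - z1 < 2 * k := by
    rcases le_total (2 * y1) z2 with g | g
    · exact ⟨y1, le_rfl, g, by linarith⟩
    · exact ⟨z2 / 2, by linarith, by linarith, by linarith⟩
  obtain ⟨s, s1, s2⟩ := exists_between (show k < min (x1 + x2 - z1 - z2 + 2 * k)
    (3 * k - (y1 + y2 + z2 - x1 - x2 - z1)) by apply lt_min <;> linarith)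
  have s3 := lt_of_lt_of_le s2 (min_le_left _ _)
  have s4 := lt_of_lt_of_le s2 (min_le_right _ _)
  obtain ⟨t1, t2, t3, t4, t5, t6, t7⟩ := split_sum a1 a2 (show 0 ≤ s by linarith) (by linarith)
  refine ⟨⟨x1 - t1, x2 - t2, y1 - k, y2, z1, z2 - 2 * k⟩, ⟨t1, t2, k, 0, 0, 2 * k⟩, ?_, ?_, ?_, ?_, ?_, ?_⟩
  · refine ⟨?_, ?_, ?_, ?_, ?_, ?_⟩ <;> dsimp only <;> linarith
  · refine ⟨?_, ?_, ?_, ?_, ?_, ?_⟩ <;> dsimp only <;> linarith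
  · change Profile.mk _ _ _ _ _ _ = _
    congr 1 <;> ring
  · right; left
    simp only [Profile.X, Profile.Y, Profile.Z]
    refine ⟨?_, ?_, ?_⟩ <;> linarith
  · right; right
    simp only [Profile.X, Profile.Y, Profile.Z]
    refine ⟨?_, ?_, ?_⟩ <;> linarith
  · simp only [wins, Profile.X, Profile.Y, Profile.Z]
    rintro (g | ⟨g1, g2, g3⟩ | ⟨g1, g2, g3⟩) <;> linarith

theorem paradoxC_suf {p : Profile} (hp : p.nonneg) (ho : Order p)
    (h1 : p.X + p.Y < 3 * p.Z) (h2 : p.Y - p.Z < p.x2) (h3 : p.X - p.Z < p.y2)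
    (h4 : p.X + p.Y - p.Z < 2 * (p.x2 + p.y2)) : paradox Cand.C p := by
  obtain ⟨a1, a2, a3, a4, a5, a6⟩ := hp
  obtain ⟨o1, o2, o3⟩ := ho
  rcases p with ⟨x1, x2, y1, y2, z1, z2⟩
  simp only [Profile.X, Profile.Y, Profile.Z] at *
  obtain ⟨m, m1, m2⟩ := exists_between (show (x1 + x2 + (y1 + y2) - (z1 + z2)) / 2 <
    min (z1 + z2) (x2 + y2) by apply lt_min <;> linarith)
  have m3 := lt_of_lt_of_le m2 (min_le_left _ _)
  have m4 := lt_of_lt_of_le m2 (min_le_right _ _)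
  obtain ⟨x, l1, l2⟩ := exists_between (show max (y1 + y2 - (z1 + z2)) (m - y2) <
    min x2 (m - (x1 + x2 - (z1 + z2))) by
      apply lt_min <;> apply max_lt <;> linarith)
  have l3 := lt_of_lt_of_le l2 (min_le_left _ _)
  have l4 := lt_of_lt_of_le l2 (min_le_right _ _)
  have l5 := lt_of_le_of_lt (le_max_left _ _) l1
  have l6 := lt_of_le_of_lt (le_max_right _ _) l1
  obtain ⟨s, s1, s2⟩ := exists_between (show max x (y1 + y2 - m) <
    min (z1 + z2 - (m - x)) (z1 + z2 + m - (x1 + x2)) by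
      apply lt_min <;> apply max_lt <;> linarith)
  have s3 := lt_of_lt_of_le s2 (min_le_left _ _)
  have s4 := lt_of_lt_of_le s2 (min_le_right _ _)
  have s5 := lt_of_le_of_lt (le_max_left _ _) s1
  have s6 := lt_of_le_of_lt (le_max_right _ _) s1
  obtain ⟨t1, t2, t3, t4, t5, t6, t7⟩ := split_sum a5 a6 (show 0 ≤ s by linarith) (by linarith)
  refine ⟨⟨0, x, y1, y2 - (m - x), t1, t2⟩, ⟨x1, x2 - x, 0, m - x, z1 - t1, z2 - t2⟩,
    ?_, ?_, ?_, ?_, ?_, ?_⟩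
  · refine ⟨?_, ?_, ?_, ?_, ?_, ?_⟩ <;> dsimp only <;> linarith
  · refine ⟨?_, ?_, ?_, ?_, ?_, ?_⟩ <;> dsimp only <;> linarith
  · change Profile.mk _ _ _ _ _ _ = _
    congr 1 <;> ring
  · right; left
    simp only [Profile.X, Profile.Y, Profile.Z]
    refine ⟨?_, ?_, ?_⟩ <;> linarith
  · right; right
    simp only [Profile.X, Profile.Y, Profile.Z]
    refine ⟨?_, ?_, ?_⟩ <;> linarith
  · simp only [wins, Profile.X, Profile.Y, Profile.Z]
    rintro (g | ⟨g1, g2, g3⟩ | ⟨g1, g2, g3⟩) <;> linarith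

/-! ### Symmetries -/

def swAB (p : Profile) : Profile := ⟨p.y1, p.y2, p.x1, p.x2, p.z2, p.z1⟩
def swBC (p : Profile) : Profile := ⟨p.x2, p.x1, p.z1, p.z2, p.y1, p.y2⟩

theorem exists_paradox_swAB {p : Profile} (h : ∃ W, paradox W p) : ∃ W, paradox W (swAB p) := by
  have hA : ∀ q, wins Cand.B (swAB q) ↔ wins Cand.A q := fun q => by
    simp only [wins, swAB, Profile.X, Profile.Y, Profile.Z]
    grind
  have hB : ∀ q, wins Cand.A (swAB q) ↔ wins Cand.B q := fun q => by
    simp only [wins, swAB, Profile.X, Profile.Y, Profile.Z]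
    grind
  have hC : ∀ q, wins Cand.C (swAB q) ↔ wins Cand.C q := fun q => by
    simp only [wins, swAB, Profile.X, Profile.Y, Profile.Z]
    grind
  have hn : ∀ q, Profile.nonneg q → Profile.nonneg (swAB q) :=
    fun q ⟨a, b, c, d, e, f⟩ => ⟨c, d, a, b, f, e⟩
  obtain ⟨W, p1, p2, n1, n2, e, w1, w2, w⟩ := h
  have e' : swAB p1 + swAB p2 = swAB p := by rw [← e]; rfl
  cases W with
  | A => exact ⟨Cand.B, _, _, hn _ n1, hn _ n2, e', (hA _).2 w1, (hA _).2 w2, fun h => w ((hA _).1 h)⟩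
  | B => exact ⟨Cand.A, _, _, hn _ n1, hn _ n2, e', (hB _).2 w1, (hB _).2 w2, fun h => w ((hB _).1 h)⟩
  | C => exact ⟨Cand.C, _, _, hn _ n1, hn _ n2, e', (hC _).2 w1, (hC _).2 w2, fun h => w ((hC _).1 h)⟩

theorem exists_paradox_swBC {p : Profile} (h : ∃ W, paradox W p) : ∃ W, paradox W (swBC p) := by
  have hA : ∀ q, wins Cand.A (swBC q) ↔ wins Cand.A q := fun q => by
    simp only [wins, swBC, Profile.X, Profile.Y, Profile.Z]
    grind
  have hB : ∀ q, wins Cand.C (swBC q) ↔ wins Cand.B q := fun q => by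
    simp only [wins, swBC, Profile.X, Profile.Y, Profile.Z]
    grind
  have hC : ∀ q, wins Cand.B (swBC q) ↔ wins Cand.C q := fun q => by
    simp only [wins, swBC, Profile.X, Profile.Y, Profile.Z]
    grind
  have hn : ∀ q, Profile.nonneg q → Profile.nonneg (swBC q) :=
    fun q ⟨a, b, c, d, e, f⟩ => ⟨b, a, e, f, c, d⟩
  obtain ⟨W, p1, p2, n1, n2, e, w1, w2, w⟩ := h
  have e' : swBC p1 + swBC p2 = swBC p := by rw [← e]; rfl
  cases W with
  | A => exact ⟨Cand.A, _, _, hn _ n1, hn _ n2, e', (hA _).2 w1, (hA _).2 w2, fun h => w ((hA _).1 h)⟩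
  | B => exact ⟨Cand.C, _, _, hn _ n1, hn _ n2, e', (hB _).2 w1, (hB _).2 w2, fun h => w ((hB _).1 h)⟩
  | C => exact ⟨Cand.B, _, _, hn _ n1, hn _ n2, e', (hC _).2 w1, (hC _).2 w2, fun h => w ((hC _).1 h)⟩

/-! ### Measure-preserving affine maps and generic points -/

theorem aff_mp (M : Matrix (Fin 5) (Fin 5) ℝ) (t : Fin 5 → ℝ) (f : (Fin 5 → ℝ) → (Fin 5 → ℝ))
    (hdet : |M.det| = 1) (hf : ∀ v, f v = M.mulVec v + t) :
    MeasurePreserving f (volume : Measure (Fin 5 → ℝ)) volume := by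
  have h0 : M.det ≠ 0 := by
    intro h; rw [h] at hdet; simp at hdet
  have h1 : MeasurePreserving (Matrix.toLin' M) (volume : Measure (Fin 5 → ℝ)) volume := by
    refine ⟨(Matrix.toLin' M).continuous_of_finiteDimensional.measurable, ?_⟩
    rw [Real.map_matrix_volume_pi_eq_smul_volume_pi h0, abs_inv, hdet]
    simp
  have h2 := (measurePreserving_add_right (volume : Measure (Fin 5 → ℝ)) t).comp h1
  convert h2 using 1
  funext v
  rw [hf]
  simp

def sAB (v : Fin 5 → ℝ) : Fin 5 → ℝ := ![v 2, v 3, v 0, v 1, 1 - (v 0 + v 1 + v 2 + v 3 + v 4)]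
def sBC (v : Fin 5 → ℝ) : Fin 5 → ℝ := ![v 1, v 0, v 4, 1 - (v 0 + v 1 + v 2 + v 3 + v 4), v 2]
def phi1 (v : Fin 5 → ℝ) : Fin 5 → ℝ := ![v 2 + v 3, v 0 + v 1, v 4, v 3, v 1]
def phi2 (v : Fin 5 → ℝ) : Fin 5 → ℝ := ![v 0 + v 1, v 2 + v 3, v 4, v 3, v 1]
def phi3 (v : Fin 5 → ℝ) : Fin 5 → ℝ := ![1 - (v 0 + v 1 + v 2 + v 3), v 0 + v 1, v 4, v 3, v 1]
def phi4 (v : Fin 5 → ℝ) : Fin 5 → ℝ := ![1 - (v 0 + v 1 + v 2 + v 3), v 2 + v 3, v 4, v 3, v 1]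

theorem sAB_mp : MeasurePreserving sAB (volume : Measure (Fin 5 → ℝ)) volume := by
  refine aff_mp !![0,0,1,0,0; 0,0,0,1,0; 1,0,0,0,0; 0,1,0,0,0; -1,-1,-1,-1,-1] ![0,0,0,0,1] _ ?_ ?_
  · simp [Matrix.det_succ_row_zero, Fin.sum_univ_succ, Fin.succAbove]
  · intro v; ext i
    fin_cases i <;> simp [sAB, dotProduct, Fin.sum_univ_succ] <;> ring

theorem sBC_mp : MeasurePreserving sBC (volume : Measure (Fin 5 → ℝ)) volume := by
  refine aff_mp !![0,1,0,0,0; 1,0,0,0,0; 0,0,0,0,1; -1,-1,-1,-1,-1; 0,0,1,0,0] ![0,0,0,1,0] _ ?_ ?_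
  · simp [Matrix.det_succ_row_zero, Fin.sum_univ_succ, Fin.succAbove]
  · intro v; ext i
    fin_cases i <;> simp [sBC, dotProduct, Fin.sum_univ_succ] <;> ring

theorem phi1_mp : MeasurePreserving phi1 (volume : Measure (Fin 5 → ℝ)) volume := by
  refine aff_mp !![0,0,1,1,0; 1,1,0,0,0; 0,0,0,0,1; 0,0,0,1,0; 0,1,0,0,0] ![0,0,0,0,0] _ ?_ ?_
  · simp [Matrix.det_succ_row_zero, Fin.sum_univ_succ, Fin.succAbove]
  · intro v; ext i
    fin_cases i <;> simp [phi1, dotProduct, Fin.sum_univ_succ]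

theorem phi2_mp : MeasurePreserving phi2 (volume : Measure (Fin 5 → ℝ)) volume := by
  refine aff_mp !![1,1,0,0,0; 0,0,1,1,0; 0,0,0,0,1; 0,0,0,1,0; 0,1,0,0,0] ![0,0,0,0,0] _ ?_ ?_
  · simp [Matrix.det_succ_row_zero, Fin.sum_univ_succ, Fin.succAbove]
  · intro v; ext i
    fin_cases i <;> simp [phi2, dotProduct, Fin.sum_univ_succ]

theorem phi3_mp : MeasurePreserving phi3 (volume : Measure (Fin 5 → ℝ)) volume := by
  refine aff_mp !![-1,-1,-1,-1,0; 1,1,0,0,0; 0,0,0,0,1; 0,0,0,1,0; 0,1,0,0,0] ![1,0,0,0,0] _ ?_ ?_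
  · simp [Matrix.det_succ_row_zero, Fin.sum_univ_succ, Fin.succAbove]
  · intro v; ext i
    fin_cases i <;> simp [phi3, dotProduct, Fin.sum_univ_succ] <;> ring

theorem phi4_mp : MeasurePreserving phi4 (volume : Measure (Fin 5 → ℝ)) volume := by
  refine aff_mp !![-1,-1,-1,-1,0; 0,0,1,1,0; 0,0,0,0,1; 0,0,0,1,0; 0,1,0,0,0] ![1,0,0,0,0] _ ?_ ?_
  · simp [Matrix.det_succ_row_zero, Fin.sum_univ_succ, Fin.succAbove]
  · intro v; ext i
    fin_cases i <;> simp [phi4, dotProduct, Fin.sum_univ_succ] <;> ring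

theorem ae_ne_aff (a0 a1 a2 a3 a4 k : ℝ) (ha : ∃ i, ![a0, a1, a2, a3, a4] i ≠ 0) :
    ∀ᵐ v : Fin 5 → ℝ, a0 * v 0 + a1 * v 1 + a2 * v 2 + a3 * v 3 + a4 * v 4 ≠ k := by
  let L : (Fin 5 → ℝ) →ₗ[ℝ] ℝ := a0 • LinearMap.proj 0 + a1 • LinearMap.proj 1 + a2 • LinearMap.proj 2
    + a3 • LinearMap.proj 3 + a4 • LinearMap.proj 4
  have hL : ∀ v, L v = a0 * v 0 + a1 * v 1 + a2 * v 2 + a3 * v 3 + a4 * v 4 := fun v => by simp [L]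
  have hs : Function.Surjective L := by
    refine LinearMap.surjective_of_ne_zero ?_
    intro h
    obtain ⟨i, hi⟩ := ha
    apply hi
    have := congrArg (fun f => f (Pi.single i 1)) h
    rw [LinearMap.zero_apply, hL] at this
    fin_cases i <;> simpa using this
  have hm : Measurable L := L.continuous_of_finiteDimensional.measurable
  obtain ⟨c, -, hc⟩ := L.exists_map_addHaar_eq_smul_addHaar volume volume hs
  have : Measure.map L volume {k} = 0 := by rw [hc]; simp
  rw [Measure.map_apply hm (measurableSet_singleton k)] at this
  rw [ae_iff]
  convert this using 2
  ext v
  simp [hL]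

theorem mem_P1 (v : Fin 5 → ℝ) : phi1 v ∈ cellP1 ↔
    ((1/3) < (v 2 + v 3) ∧ (v 2 + v 3) < (1/2)) ∧
    ((1/2) + (-1/2)*(v 2 + v 3) < (v 0 + v 1) ∧ (v 0 + v 1) < (v 2 + v 3)) ∧
    ((-1)*(v 0 + v 1) + (v 2 + v 3) < v 4 ∧ v 4 < (1/2) + (-1)*(v 0 + v 1)) ∧
    (0 < v 3 ∧ v 3 < (-1/2) + (v 0 + v 1) + (v 2 + v 3) + v 4) ∧
    (0 < v 1 ∧ v 1 < (v 0 + v 1)) := Iff.rfl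

theorem mem_P2 (v : Fin 5 → ℝ) : phi2 v ∈ cellP2 ↔
    ((1/3) < (v 0 + v 1) ∧ (v 0 + v 1) < (1/2)) ∧
    ((1/2) + (-1/2)*(v 0 + v 1) < (v 2 + v 3) ∧ (v 2 + v 3) < (v 0 + v 1)) ∧
    (0 < v 4 ∧ v 4 < (1/2) + (-1)*(v 0 + v 1)) ∧
    (0 < v 3 ∧ v 3 < (-1/2) + (v 0 + v 1) + (v 2 + v 3) + v 4) ∧
    (0 < v 1 ∧ v 1 < (v 0 + v 1)) := Iff.rfl

theorem mem_Qa (v : Fin 5 → ℝ) : phi3 v ∈ cellQa ↔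
    ((1/4) < (1 - (v 0 + v 1 + v 2 + v 3)) ∧ (1 - (v 0 + v 1 + v 2 + v 3)) < (1/3)) ∧
    ((1 - (v 0 + v 1 + v 2 + v 3)) < (v 0 + v 1) ∧ (v 0 + v 1) < (1/2) + (-1/2)*(1 - (v 0 + v 1 + v 2 + v 3))) ∧
    (0 < v 4 ∧ v 4 < (1) + (-2)*(v 0 + v 1) + (-1)*(1 - (v 0 + v 1 + v 2 + v 3))) ∧
    ((v 0 + v 1) + (-1)*(1 - (v 0 + v 1 + v 2 + v 3)) < v 3 ∧ v 3 < (-1/2) + (v 0 + v 1) + (1 - (v 0 + v 1 + v 2 + v 3))) ∧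
    ((1/2) + (-1)*(1 - (v 0 + v 1 + v 2 + v 3)) + (-1)*v 3 < v 1 ∧ v 1 < (v 0 + v 1)) := Iff.rfl

theorem mem_Qb (v : Fin 5 → ℝ) : phi3 v ∈ cellQb ↔
    ((1/4) < (1 - (v 0 + v 1 + v 2 + v 3)) ∧ (1 - (v 0 + v 1 + v 2 + v 3)) < (1/3)) ∧
    ((1 - (v 0 + v 1 + v 2 + v 3)) < (v 0 + v 1) ∧ (v 0 + v 1) < (1/2) + (-1/2)*(1 - (v 0 + v 1 + v 2 + v 3))) ∧
    (0 < v 4 ∧ v 4 < (1) + (-2)*(v 0 + v 1) + (-1)*(1 - (v 0 + v 1 + v 2 + v 3))) ∧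
    ((-1/2) + (v 0 + v 1) + (1 - (v 0 + v 1 + v 2 + v 3)) < v 3 ∧ v 3 < (1) + (-1)*(v 0 + v 1) + (-1)*(1 - (v 0 + v 1 + v 2 + v 3))) ∧
    ((1) + (-1)*(v 0 + v 1) + (-2)*(1 - (v 0 + v 1 + v 2 + v 3)) < v 1 ∧ v 1 < (v 0 + v 1)) := Iff.rfl

theorem mem_Qc (v : Fin 5 → ℝ) : phi3 v ∈ cellQc ↔
    ((1/4) < (1 - (v 0 + v 1 + v 2 + v 3)) ∧ (1 - (v 0 + v 1 + v 2 + v 3)) < (1/3)) ∧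
    ((1 - (v 0 + v 1 + v 2 + v 3)) < (v 0 + v 1) ∧ (v 0 + v 1) < (1/2) + (-1/2)*(1 - (v 0 + v 1 + v 2 + v 3))) ∧
    ((1) + (-2)*(v 0 + v 1) + (-1)*(1 - (v 0 + v 1 + v 2 + v 3)) < v 4 ∧ v 4 < (1/2) + (-1)*(v 0 + v 1)) ∧
    ((1/2) + (-1)*(1 - (v 0 + v 1 + v 2 + v 3)) + v 4 < v 3 ∧ v 3 < (1) + (-1)*(v 0 + v 1) + (-1)*(1 - (v 0 + v 1 + v 2 + v 3))) ∧
    ((1) + (-1)*(v 0 + v 1) + (-2)*(1 - (v 0 + v 1 + v 2 + v 3)) < v 1 ∧ v 1 < (v 0 + v 1)) := Iff.rfl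

theorem mem_Q2 (v : Fin 5 → ℝ) : phi4 v ∈ cellQ2 ↔
    ((1/4) < (1 - (v 0 + v 1 + v 2 + v 3)) ∧ (1 - (v 0 + v 1 + v 2 + v 3)) < (1/3)) ∧
    ((1 - (v 0 + v 1 + v 2 + v 3)) < (v 2 + v 3) ∧ (v 2 + v 3) < (1/2) + (-1/2)*(1 - (v 0 + v 1 + v 2 + v 3))) ∧
    (0 < v 4 ∧ v 4 < (-1/2) + (v 2 + v 3) + (1 - (v 0 + v 1 + v 2 + v 3))) ∧
    ((1/2) + (-1)*(1 - (v 0 + v 1 + v 2 + v 3)) + v 4 < v 3 ∧ v 3 < (v 2 + v 3)) ∧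
    ((v 2 + v 3) + (-1)*(1 - (v 0 + v 1 + v 2 + v 3)) < v 1 ∧ v 1 < (1) + (-1)*(v 2 + v 3) + (-1)*(1 - (v 0 + v 1 + v 2 + v 3))) := Iff.rfl

def Ecell : Fin 6 → Set (Fin 5 → ℝ) :=
  ![phi1 ⁻¹' cellP1, phi2 ⁻¹' cellP2, phi3 ⁻¹' cellQa, phi3 ⁻¹' cellQb, phi3 ⁻¹' cellQc,
    phi4 ⁻¹' cellQ2]

def Eset : Set (Fin 5 → ℝ) := ⋃ i, Ecell i

theorem mem_Eset (v : Fin 5 → ℝ) : v ∈ Eset ↔ phi1 v ∈ cellP1 ∨ phi2 v ∈ cellP2 ∨ phi3 v ∈ cellQa ∨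
    phi3 v ∈ cellQb ∨ phi3 v ∈ cellQc ∨ phi4 v ∈ cellQ2 := by
  rw [Eset, mem_iUnion]
  constructor
  · rintro ⟨i, hi⟩
    fin_cases i
    · exact Or.inl hi
    · exact Or.inr (Or.inl hi)
    · exact Or.inr (Or.inr (Or.inl hi))
    · exact Or.inr (Or.inr (Or.inr (Or.inl hi)))
    · exact Or.inr (Or.inr (Or.inr (Or.inr (Or.inl hi))))
    · exact Or.inr (Or.inr (Or.inr (Or.inr (Or.inr hi))))
  · rintro (h | h | h | h | h | h)
    · exact ⟨0, h⟩
    · exact ⟨1, h⟩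
    · exact ⟨2, h⟩
    · exact ⟨3, h⟩
    · exact ⟨4, h⟩
    · exact ⟨5, h⟩

theorem Ecell_meas (i : Fin 6) : MeasurableSet (Ecell i) := by
  fin_cases i
  · exact phi1_mp.measurable cellP1_meas
  · exact phi2_mp.measurable cellP2_meas
  · exact phi3_mp.measurable cellQa_meas
  · exact phi3_mp.measurable cellQb_meas
  · exact phi3_mp.measurable cellQc_meas
  · exact phi4_mp.measurable cellQ2_meas

theorem Eset_meas : MeasurableSet Eset := MeasurableSet.iUnion Ecell_meas

theorem disj_of_lt {ι α : Type*} [LinearOrder ι] (s : ι → Set α)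
    (h : ∀ i j, i < j → ∀ v ∈ s i, v ∈ s j → False) : Pairwise (Function.onFun Disjoint s) := by
  intro i j hij
  rw [Function.onFun, disjoint_left]
  intro v h1 h2
  rcases lt_or_gt_of_ne hij with g | g
  · exact h i j g v h1 h2
  · exact h j i g v h2 h1

theorem Ecell_disj : Pairwise (Function.onFun Disjoint Ecell) := by
  apply disj_of_lt
  intro i j hij v h1 h2
  fin_cases i <;> fin_cases j <;> first
    | (exfalso; revert hij; decide)
    | (simp only [Ecell] at h1 h2
       simp [mem_P1, mem_P2, mem_Qa, mem_Qb, mem_Qc, mem_Q2] at h1 h2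
       linarith)

theorem Eset_vol : volume Eset = ENNReal.ofReal (191 / 552960) := by
  rw [Eset, measure_iUnion Ecell_disj Ecell_meas, tsum_fintype, Fin.sum_univ_six]
  have h1 : volume (Ecell 0) = ENNReal.ofReal (1/6480) :=
    (phi1_mp.measure_preimage cellP1_meas.nullMeasurableSet).trans cellP1_vol
  have h2 : volume (Ecell 1) = ENNReal.ofReal (7/46080) :=
    (phi2_mp.measure_preimage cellP2_meas.nullMeasurableSet).trans cellP2_vol
  have h3 : volume (Ecell 2) = ENNReal.ofReal (1/368640) :=
    (phi3_mp.measure_preimage cellQa_meas.nullMeasurableSet).trans cellQa_vol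
  have h4 : volume (Ecell 3) = ENNReal.ofReal (17/829440) :=
    (phi3_mp.measure_preimage cellQb_meas.nullMeasurableSet).trans cellQb_vol
  have h5 : volume (Ecell 4) = ENNReal.ofReal (35/5308416) :=
    (phi3_mp.measure_preimage cellQc_meas.nullMeasurableSet).trans cellQc_vol
  have h6 : volume (Ecell 5) = ENNReal.ofReal (83/8847360) :=
    (phi4_mp.measure_preimage cellQ2_meas.nullMeasurableSet).trans cellQ2_vol
  rw [h1, h2, h3, h4, h5, h6, ← ENNReal.ofReal_add, ← ENNReal.ofReal_add, ← ENNReal.ofReal_add,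
    ← ENNReal.ofReal_add, ← ENNReal.ofReal_add] <;> norm_num

/-- The set of the statement. -/
def Sset : Set (Fin 5 → ℝ) := {v ∈ T | ∃ W : Cand, paradox W (profOf v)}

def OrdV (v : Fin 5 → ℝ) : Prop :=
  1 - (v 0 + v 1 + v 2 + v 3) < v 0 + v 1 ∧ 1 - (v 0 + v 1 + v 2 + v 3) < v 2 + v 3 ∧
  v 0 + v 1 + v 4 < v 2 + v 3 + (1 - (v 0 + v 1 + v 2 + v 3 + v 4))

/-- Points avoiding finitely many hyperplanes. -/
def Gen (v : Fin 5 → ℝ) : Prop :=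
  ((v 0 ≠ 0 ∧ v 1 ≠ 0 ∧ v 2 ≠ 0 ∧ v 3 ≠ 0 ∧ v 4 ≠ 0 ∧ v 0 + v 1 + v 2 + v 3 + v 4 ≠ 1) ∧
  v 0 + v 1 ≠ v 2 + v 3 ∧ v 0 + v 1 + v 0 + v 1 + v 2 + v 3 ≠ 1 ∧
  v 2 + v 3 + v 0 + v 1 + v 2 + v 3 ≠ 1 ∧
  2 * (v 0 + v 1 + v 4) ≠ 1) ∧
  (v 2 + v 3 ≠ v 0 + v 1 + v 4 ∧ 2 * (v 0 + v 1 + v 2 + v 4) ≠ 1 ∧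
  4 * (v 0 + v 1 + v 2 + v 3) ≠ 3 ∧
  v 1 ≠ v 2 + v 3 - (1 - (v 0 + v 1 + v 2 + v 3)) ∧
  v 3 ≠ v 0 + v 1 - (1 - (v 0 + v 1 + v 2 + v 3)) ∧
  v 1 + v 3 ≠ v 0 + v 1 + v 2 + v 3 - 1 / 2 ∧ v 2 + 2 * v 3 ≠ 1 / 2)

theorem profOf_nonneg {v : Fin 5 → ℝ} (hv : v ∈ T) : (profOf v).nonneg :=
  ⟨hv.1 0, hv.1 1, hv.1 2, hv.1 3, hv.1 4, sub_nonneg.2 hv.2⟩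

theorem Ord_order {v : Fin 5 → ℝ} (h : OrdV v) : Order (profOf v) := by
  obtain ⟨h1, h2, h3⟩ := h
  simp only [Order, profOf, Profile.X, Profile.Y, Profile.Z]
  refine ⟨?_, ?_, ?_⟩ <;> linarith

theorem Eset_ord {v : Fin 5 → ℝ} (h : v ∈ Eset) : OrdV v := by
  rw [mem_Eset, mem_P1, mem_P2, mem_Qa, mem_Qb, mem_Qc, mem_Q2] at h
  rcases h with ⟨⟨g1, g2⟩, ⟨g3, g4⟩, ⟨g5, g6⟩, ⟨g7, g8⟩, ⟨g9, g10⟩⟩ |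
    ⟨⟨g1, g2⟩, ⟨g3, g4⟩, ⟨g5, g6⟩, ⟨g7, g8⟩, ⟨g9, g10⟩⟩ |
    ⟨⟨g1, g2⟩, ⟨g3, g4⟩, ⟨g5, g6⟩, ⟨g7, g8⟩, ⟨g9, g10⟩⟩ |
    ⟨⟨g1, g2⟩, ⟨g3, g4⟩, ⟨g5, g6⟩, ⟨g7, g8⟩, ⟨g9, g10⟩⟩ |
    ⟨⟨g1, g2⟩, ⟨g3, g4⟩, ⟨g5, g6⟩, ⟨g7, g8⟩, ⟨g9, g10⟩⟩ |
    ⟨⟨g1, g2⟩, ⟨g3, g4⟩, ⟨g5, g6⟩, ⟨g7, g8⟩, ⟨g9, g10⟩⟩ <;>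
  refine ⟨?_, ?_, ?_⟩ <;> linarith

theorem Eset_T {v : Fin 5 → ℝ} (h : v ∈ Eset) : v ∈ T := by
  suffices hs : (0 ≤ v 0 ∧ 0 ≤ v 1 ∧ 0 ≤ v 2 ∧ 0 ≤ v 3 ∧ 0 ≤ v 4) ∧ v 0 + v 1 + v 2 + v 3 + v 4 ≤ 1 by
    obtain ⟨⟨h0, h1, h2, h3, h4⟩, h5⟩ := hs
    refine ⟨fun i => ?_, h5⟩
    fin_cases i <;> assumption
  rw [mem_Eset, mem_P1, mem_P2, mem_Qa, mem_Qb, mem_Qc, mem_Q2] at h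
  rcases h with ⟨⟨g1, g2⟩, ⟨g3, g4⟩, ⟨g5, g6⟩, ⟨g7, g8⟩, ⟨g9, g10⟩⟩ |
    ⟨⟨g1, g2⟩, ⟨g3, g4⟩, ⟨g5, g6⟩, ⟨g7, g8⟩, ⟨g9, g10⟩⟩ |
    ⟨⟨g1, g2⟩, ⟨g3, g4⟩, ⟨g5, g6⟩, ⟨g7, g8⟩, ⟨g9, g10⟩⟩ |
    ⟨⟨g1, g2⟩, ⟨g3, g4⟩, ⟨g5, g6⟩, ⟨g7, g8⟩, ⟨g9, g10⟩⟩ |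
    ⟨⟨g1, g2⟩, ⟨g3, g4⟩, ⟨g5, g6⟩, ⟨g7, g8⟩, ⟨g9, g10⟩⟩ |
    ⟨⟨g1, g2⟩, ⟨g3, g4⟩, ⟨g5, g6⟩, ⟨g7, g8⟩, ⟨g9, g10⟩⟩ <;>
  refine ⟨⟨?_, ?_, ?_, ?_, ?_⟩, ?_⟩ <;> linarith

theorem Eset_sub {v : Fin 5 → ℝ} (h : v ∈ Eset) : v ∈ Sset := by
  have hT := Eset_T h
  have ho := Ord_order (Eset_ord h)
  refine ⟨hT, ?_⟩
  have hn := profOf_nonneg hT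
  rw [mem_Eset, mem_P1, mem_P2, mem_Qa, mem_Qb, mem_Qc, mem_Q2] at h
  have hA := paradoxA_suf hn ho
  have hC := paradoxC_suf hn ho
  simp only [profOf, Profile.X, Profile.Y, Profile.Z] at hA hC
  rcases h with ⟨⟨g1, g2⟩, ⟨g3, g4⟩, ⟨g5, g6⟩, ⟨g7, g8⟩, ⟨g9, g10⟩⟩ |
    ⟨⟨g1, g2⟩, ⟨g3, g4⟩, ⟨g5, g6⟩, ⟨g7, g8⟩, ⟨g9, g10⟩⟩ |
    ⟨⟨g1, g2⟩, ⟨g3, g4⟩, ⟨g5, g6⟩, ⟨g7, g8⟩, ⟨g9, g10⟩⟩ |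
    ⟨⟨g1, g2⟩, ⟨g3, g4⟩, ⟨g5, g6⟩, ⟨g7, g8⟩, ⟨g9, g10⟩⟩ |
    ⟨⟨g1, g2⟩, ⟨g3, g4⟩, ⟨g5, g6⟩, ⟨g7, g8⟩, ⟨g9, g10⟩⟩ |
    ⟨⟨g1, g2⟩, ⟨g3, g4⟩, ⟨g5, g6⟩, ⟨g7, g8⟩, ⟨g9, g10⟩⟩
  · exact ⟨_, hA (by linarith) (by linarith)⟩
  · exact ⟨_, hA (by linarith) (by linarith)⟩
  all_goals exact ⟨_, hC (by linarith) (by linarith) (by linarith) (by linarith)⟩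

theorem Sset_sub {v : Fin 5 → ℝ} (h : v ∈ Sset) (ho : OrdV v) (hg : Gen v) : v ∈ Eset := by
  obtain ⟨hT, W, hW⟩ := h
  have ho' := Ord_order ho
  have hn := profOf_nonneg hT
  obtain ⟨n1, n2, n3, n4, n5, n6⟩ := hn
  obtain ⟨⟨⟨a1, a2, a3, a4, a5, a6⟩, a7, a8, a9, a10⟩, a11, a12, a13, a14, a15, a16, a17⟩ := hg
  obtain ⟨o1, o2, o3⟩ := ho

  simp only [profOf] at n1 n2 n3 n4 n5 n6
  replace n1 := lt_of_le_of_ne n1 a1.symm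
  replace n2 := lt_of_le_of_ne n2 a2.symm
  replace n3 := lt_of_le_of_ne n3 a3.symm
  replace n4 := lt_of_le_of_ne n4 a4.symm
  replace n5 := lt_of_le_of_ne n5 a5.symm
  replace n6 : v 0 + v 1 + v 2 + v 3 + v 4 < 1 := lt_of_le_of_ne (by linarith) a6
  rw [mem_Eset, mem_P1, mem_P2, mem_Qa, mem_Qb, mem_Qc, mem_Q2]
  have hP : v 2 + v 3 < v 0 + v 1 + v 4 → 1 < 2 * (v 0 + v 1 + v 2 + v 4) →
    phi1 v ∈ cellP1 ∨ phi2 v ∈ cellP2 := by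
    intro p1 p2
    rw [mem_P1, mem_P2]
    rcases lt_or_gt_of_ne a7 with g | g
    · left
      refine ⟨⟨?_, ?_⟩, ⟨?_, ?_⟩, ⟨?_, ?_⟩, ⟨?_, ?_⟩, ⟨?_, ?_⟩⟩ <;> linarith
    · right
      refine ⟨⟨?_, ?_⟩, ⟨?_, ?_⟩, ⟨?_, ?_⟩, ⟨?_, ?_⟩, ⟨?_, ?_⟩⟩ <;> linarith
  rw [mem_P1, mem_P2] at hP
  cases W with
  | A =>
    obtain ⟨b1, b2⟩ := paradoxA_nec ho' hW
    simp only [profOf, Profile.X, Profile.Y, Profile.Z] at b1 b2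
    rcases hP (lt_of_le_of_ne (by linarith) a11) (lt_of_le_of_ne (by linarith) a12.symm) with h | h
    · exact Or.inl h
    · exact Or.inr (Or.inl h)
  | B => exact absurd hW (not_paradoxB ho')
  | C =>
    obtain ⟨b1, b2, b3, b4⟩ := paradoxC_nec ho' hW
    simp only [profOf, Profile.X, Profile.Y, Profile.Z] at b1 b2 b3 b4
    have c1 : 4 * (v 0 + v 1 + v 2 + v 3) < 3 := lt_of_le_of_ne (by linarith) a13
    have c2 : v 2 + v 3 - (1 - (v 0 + v 1 + v 2 + v 3)) < v 1 := lt_of_le_of_ne (by linarith) a14.symm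
    have c3 : v 0 + v 1 - (1 - (v 0 + v 1 + v 2 + v 3)) < v 3 := lt_of_le_of_ne (by linarith) a15.symm
    have c4 : v 0 + v 1 + v 2 + v 3 - 1 / 2 < v 1 + v 3 := lt_of_le_of_ne (by linarith) a16.symm
    rcases lt_or_gt_of_ne a11 with p1 | p1
    · rcases lt_or_gt_of_ne a12 with p2 | p2
      · right; right; right; right
        rcases lt_or_gt_of_ne a7 with g | g
        · left
          refine ⟨⟨?_, ?_⟩, ⟨?_, ?_⟩, ⟨?_, ?_⟩, ⟨?_, ?_⟩, ⟨?_, ?_⟩⟩ <;> linarith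
        · right
          refine ⟨⟨?_, ?_⟩, ⟨?_, ?_⟩, ⟨?_, ?_⟩, ⟨?_, ?_⟩, ⟨?_, ?_⟩⟩ <;> linarith
      · rcases hP p1 p2 with h | h
        · exact Or.inl h
        · exact Or.inr (Or.inl h)
    · right; right
      rcases lt_or_gt_of_ne a17 with g | g
      · left
        refine ⟨⟨?_, ?_⟩, ⟨?_, ?_⟩, ⟨?_, ?_⟩, ⟨?_, ?_⟩, ⟨?_, ?_⟩⟩ <;> linarith
      · right; left
        refine ⟨⟨?_, ?_⟩, ⟨?_, ?_⟩, ⟨?_, ?_⟩, ⟨?_, ?_⟩, ⟨?_, ?_⟩⟩ <;> linarith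

theorem ae_gen : ∀ᵐ v : Fin 5 → ℝ, Gen v := by
  filter_upwards [ae_ne_aff 1 0 0 0 0 0 ⟨0, by simp⟩, ae_ne_aff 0 1 0 0 0 0 ⟨1, by simp⟩,
    ae_ne_aff 0 0 1 0 0 0 ⟨2, by simp⟩, ae_ne_aff 0 0 0 1 0 0 ⟨3, by simp⟩,
    ae_ne_aff 0 0 0 0 1 0 ⟨4, by simp⟩, ae_ne_aff 1 1 1 1 1 1 ⟨0, by simp⟩,
    ae_ne_aff 1 1 (-1) (-1) 0 0 ⟨0, by simp⟩, ae_ne_aff 2 2 1 1 0 1 ⟨0, by simp⟩,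
    ae_ne_aff 1 1 2 2 0 1 ⟨0, by simp⟩, ae_ne_aff 2 2 0 0 2 1 ⟨0, by simp⟩,
    ae_ne_aff 1 1 (-1) (-1) 1 0 ⟨0, by simp⟩, ae_ne_aff 2 2 2 0 2 1 ⟨0, by simp⟩,
    ae_ne_aff 4 4 4 4 0 3 ⟨0, by simp⟩, ae_ne_aff 1 0 2 2 0 1 ⟨0, by simp⟩,
    ae_ne_aff 2 2 1 0 0 1 ⟨0, by simp⟩, ae_ne_aff 1 0 1 0 0 (1/2) ⟨0, by simp⟩,
    ae_ne_aff 0 0 1 2 0 (1/2) ⟨2, by simp⟩] with v h1 h2 h3 h4 h5 h6 h7 h8 h9 h10 h11 h12 h13 h14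
    h15 h16 h17
  refine ⟨⟨⟨fun h => h1 ?_, fun h => h2 ?_, fun h => h3 ?_, fun h => h4 ?_, fun h => h5 ?_,
    fun h => h6 ?_⟩, fun h => h7 ?_, fun h => h8 ?_, fun h => h9 ?_, fun h => h10 ?_⟩,
    fun h => h11 ?_, fun h => h12 ?_, fun h => h13 ?_, fun h => h14 ?_, fun h => h15 ?_,
    fun h => h16 ?_, fun h => h17 ?_⟩ <;> linarith

theorem T_iff (v : Fin 5 → ℝ) : v ∈ T ↔ (0 ≤ v 0 ∧ 0 ≤ v 1 ∧ 0 ≤ v 2 ∧ 0 ≤ v 3 ∧ 0 ≤ v 4) ∧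
    v 0 + v 1 + v 2 + v 3 + v 4 ≤ 1 := by
  constructor
  · intro h
    exact ⟨⟨h.1 0, h.1 1, h.1 2, h.1 3, h.1 4⟩, h.2⟩
  · rintro ⟨⟨h0, h1, h2, h3, h4⟩, h5⟩
    refine ⟨fun i => ?_, h5⟩
    fin_cases i <;> assumption

theorem sAB_sAB (v : Fin 5 → ℝ) : sAB (sAB v) = v := by
  ext i; fin_cases i <;> simp [sAB]
  ring

theorem sBC_sBC (v : Fin 5 → ℝ) : sBC (sBC v) = v := by
  ext i; fin_cases i <;> simp [sBC]
  ring

theorem sAB_S (v : Fin 5 → ℝ) : sAB v ∈ Sset ↔ v ∈ Sset := by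
  have key : ∀ v, v ∈ Sset → sAB v ∈ Sset := by
    rintro v ⟨hT, hp⟩
    rw [T_iff] at hT
    obtain ⟨⟨h0, h1, h2, h3, h4⟩, h5⟩ := hT
    refine ⟨?_, ?_⟩
    · rw [T_iff]
      refine ⟨⟨h2, h3, h0, h1, sub_nonneg.2 h5⟩, ?_⟩
      simp [sAB]; linarith
    · have e : profOf (sAB v) = swAB (profOf v) := by
        simp [profOf, sAB, swAB]; ring
      rw [e]; exact exists_paradox_swAB hp
  exact ⟨fun h => by simpa [sAB_sAB] using key _ h, key v⟩

theorem sBC_S (v : Fin 5 → ℝ) : sBC v ∈ Sset ↔ v ∈ Sset := by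
  have key : ∀ v, v ∈ Sset → sBC v ∈ Sset := by
    rintro v ⟨hT, hp⟩
    rw [T_iff] at hT
    obtain ⟨⟨h0, h1, h2, h3, h4⟩, h5⟩ := hT
    refine ⟨?_, ?_⟩
    · rw [T_iff]
      refine ⟨⟨h1, h0, h4, sub_nonneg.2 h5, h2⟩, ?_⟩
      simp [sBC]; linarith
    · have e : profOf (sBC v) = swBC (profOf v) := by
        simp [profOf, sBC, swBC]; ring
      rw [e]; exact exists_paradox_swBC hp
  exact ⟨fun h => by simpa [sBC_sBC] using key _ h, key v⟩

def G : Fin 6 → (Fin 5 → ℝ) → (Fin 5 → ℝ) :=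
  ![id, sAB, sBC, sAB ∘ sBC, sBC ∘ sAB, sAB ∘ sBC ∘ sAB]

theorem G_mp (i : Fin 6) : MeasurePreserving (G i) (volume : Measure (Fin 5 → ℝ)) volume := by
  fin_cases i
  · exact MeasurePreserving.id _
  · exact sAB_mp
  · exact sBC_mp
  · exact sAB_mp.comp sBC_mp
  · exact sBC_mp.comp sAB_mp
  · exact sAB_mp.comp (sBC_mp.comp sAB_mp)

theorem G_S (i : Fin 6) (v : Fin 5 → ℝ) : G i v ∈ Sset ↔ v ∈ Sset := by
  fin_cases i <;> simp [G, sAB_S, sBC_S]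


theorem G_ord_disj : ∀ i j, i < j → ∀ v, OrdV (G i v) → OrdV (G j v) → False := by
  intro i j hij v h1 h2
  fin_cases i <;> fin_cases j <;> first
    | (exfalso; revert hij; decide)
    | (simp [G, OrdV, sAB, sBC] at h1 h2
       linarith)

theorem G_ord_ex (v : Fin 5 → ℝ) (h : ∀ i, Gen (G i v)) : ∃ i, OrdV (G i v) := by
  have h0 := h 0
  have h1 := h 1
  have h2 := h 2
  have h3 := h 3
  have h4 := h 4
  have h5 := h 5
  replace h0 := h0.1.2
  replace h1 := h1.1.2
  replace h2 := h2.1.2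
  replace h3 := h3.1.2
  replace h4 := h4.1.2
  replace h5 := h5.1.2
  simp [G, sAB, sBC] at h0 h1 h2 h3 h4 h5
  by_contra hc
  push Not at hc
  have g0 := hc 0
  have g1 := hc 1
  have g2 := hc 2
  have g3 := hc 3
  have g4 := hc 4
  have g5 := hc 5
  simp [G, OrdV, sAB, sBC] at g0 g1 g2 g3 g4 g5
  grind

theorem Sset_ae : Sset =ᵐ[volume] ⋃ i, G i ⁻¹' Eset := by
  have hg : ∀ᵐ v : Fin 5 → ℝ, ∀ i, Gen (G i v) := by
    rw [ae_all_iff]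
    intro i
    exact (G_mp i).quasiMeasurePreserving.ae ae_gen
  filter_upwards [hg] with v hv
  apply propext
  change v ∈ Sset ↔ v ∈ (⋃ i, G i ⁻¹' Eset)
  rw [mem_iUnion]
  constructor
  · intro h
    obtain ⟨i, hi⟩ := G_ord_ex v hv
    exact ⟨i, Sset_sub ((G_S i v).2 h) hi (hv i)⟩
  · rintro ⟨i, hi⟩
    exact (G_S i v).1 (Eset_sub hi)

theorem stmt15 :
    MeasureTheory.volume
      {v ∈ T | ∃ W : Cand, paradox W (profOf v)} =
      (191 / 768) * (1 / 120 : ENNReal) := by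
  change volume Sset = _
  rw [measure_congr Sset_ae, measure_iUnion]
  · have : ∀ i, volume (G i ⁻¹' Eset) = ENNReal.ofReal (191 / 552960) := fun i =>
      ((G_mp i).measure_preimage Eset_meas.nullMeasurableSet).trans Eset_vol
    rw [tsum_congr this, tsum_fintype, Finset.sum_const]
    have e : (191 / 768 : ENNReal) * (1 / 120) = ENNReal.ofReal ((191 / 768) * (1 / 120)) := by
      rw [ENNReal.ofReal_mul (by norm_num), ENNReal.ofReal_div_of_pos (by norm_num),
        ENNReal.ofReal_div_of_pos (by norm_num)]
      norm_num
    rw [e, ← ENNReal.ofReal_nsmul]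
    congr 1
    norm_num
  · apply disj_of_lt
    intro i j hij v h1 h2
    exact G_ord_disj i j hij v (Eset_ord h1) (Eset_ord h2)
  · intro i
    exact (G_mp i).measurable Eset_meas
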